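/- Let $n \ge 0$ and let $P$ be a partial order on $\{1,\dots,n\}$ that is a unit interval order, i.e. there is a map $r : \{1,\dots,n\} \to \mathbb{R}$ such that for all $i, j$: $i <_P j$ if and only if $r(i) + 1 < r(j)$. Define the altitude of $i$ by $\alpha(i) = |\{j : j \le_P i\}| - |\{j : i \le_P j\}|$, and call $P$ canonically labeled if, for all $i, j$, $\alpha(i) < \alpha(j)$ implies $i < j$ as integers. Then $P$ is canonically labeled if and only if there exists a map $q : \{1,\dots,n\} \to \mathbb{R}$ with $q(1) < q(2) < \dots < q(n)$ such that for all $i, j \in \{1,\dots,n\}$: $i <_P j$ if and only if $q(i) + 1 < q(j)$. -/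

import Mathlib

/-- `q` gives an interval representation `{[q i, q i + 1]}` of `P`: `i <_P j` if and only if the
interval of `i` lies strictly to the left of the interval of `j`. -/
def IsIntervalRep {n : ℕ} (P : PartialOrder (Fin n)) (q : Fin n → ℝ) : Prop :=
  ∀ i j : Fin n, P.lt i j ↔ q i + 1 < q j

/-- `P` is a unit interval order if it has an interval representation. -/
def IsUnitIntervalOrder {n : ℕ} (P : PartialOrder (Fin n)) : Prop :=
  ∃ q : Fin n → ℝ, IsIntervalRep P q

open Classical in
/-- The altitude of `i`: `|{j : j ≤_P i}| - |{j : i ≤_P j}|`. -/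
noncomputable def altitude {n : ℕ} (P : PartialOrder (Fin n)) (i : Fin n) : ℤ :=
  ((Finset.univ.filter (fun j : Fin n => P.le j i)).card : ℤ) -
    ((Finset.univ.filter (fun j : Fin n => P.le i j)).card : ℤ)

/-- `P` is canonically labeled if `α(i) < α(j)` implies `i < j` as integers. The labels are
compared through `Fin.val`, so that the order meant is the one of the integers and not `P`. -/
def IsCanonicallyLabeled {n : ℕ} (P : PartialOrder (Fin n)) : Prop :=
  ∀ i j : Fin n, altitude P i < altitude P j → i.val < j.val

open Classical in
/-- The altitude may be computed with strict instead of weak inequalities. -/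
theorem altitude_eq_card_lt {n : ℕ} (P : PartialOrder (Fin n)) (i : Fin n) :
    altitude P i = ((Finset.univ.filter (fun j : Fin n => P.lt j i)).card : ℤ) -
      ((Finset.univ.filter (fun j : Fin n => P.lt i j)).card : ℤ) := by
  have hdown : Finset.univ.filter (fun j : Fin n => P.le j i) =
      insert i (Finset.univ.filter (fun j : Fin n => P.lt j i)) := by
    ext j
    simp only [Finset.mem_filter, Finset.mem_univ, true_and, Finset.mem_insert]
    exact @le_iff_eq_or_lt _ P j i
  have hup : Finset.univ.filter (fun j : Fin n => P.le i j) =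
      insert i (Finset.univ.filter (fun j : Fin n => P.lt i j)) := by
    ext j
    simp only [Finset.mem_filter, Finset.mem_univ, true_and, Finset.mem_insert]
    rw [eq_comm (a := j)]
    exact @le_iff_eq_or_lt _ P i j
  rw [altitude, hdown, hup, Finset.card_insert_of_notMem (by simp),
    Finset.card_insert_of_notMem (by simp)]
  push_cast
  ring

namespace IsIntervalRep

variable {n : ℕ} {P : PartialOrder (Fin n)} {r : Fin n → ℝ}

theorem lt_of_lt_of_le (hr : IsIntervalRep P r) {i j k : Fin n} (hk : P.lt k i)
    (hij : r i ≤ r j) : P.lt k j :=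
  (hr k j).2 (((hr k i).1 hk).trans_le hij)

theorem lt_of_le_of_lt (hr : IsIntervalRep P r) {i j k : Fin n} (hij : r i ≤ r j)
    (hk : P.lt j k) : P.lt i k := by
  have := (hr j k).1 hk
  exact (hr i k).2 (by linarith)

theorem altitude_mono (hr : IsIntervalRep P r) {i j : Fin n} (hij : r i ≤ r j) :
    altitude P i ≤ altitude P j := by
  classical
  rw [altitude_eq_card_lt, altitude_eq_card_lt]
  have hdown : Finset.univ.filter (fun k => P.lt k i) ⊆ Finset.univ.filter (fun k => P.lt k j) :=
    Finset.monotone_filter_right Finset.univ fun k _ hk => hr.lt_of_lt_of_le hk hij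
  have hup : Finset.univ.filter (fun k => P.lt j k) ⊆ Finset.univ.filter (fun k => P.lt i k) :=
    Finset.monotone_filter_right Finset.univ fun k _ hk => hr.lt_of_le_of_lt hij hk
  have := Finset.card_le_card hdown
  have := Finset.card_le_card hup
  omega

/-- Elements of equal altitude are above, and below, the same elements. -/
theorem lt_iff_lt_of_altitude_eq (hr : IsIntervalRep P r) {i j : Fin n}
    (h : altitude P i = altitude P j) (k : Fin n) :
    (P.lt k i ↔ P.lt k j) ∧ (P.lt i k ↔ P.lt j k) := by
  classical
  wlog hij : r i ≤ r j generalizing i j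
  · have := this h.symm (le_of_not_ge hij)
    exact ⟨this.1.symm, this.2.symm⟩
  rw [altitude_eq_card_lt, altitude_eq_card_lt] at h
  have hdown : Finset.univ.filter (fun k => P.lt k i) ⊆ Finset.univ.filter (fun k => P.lt k j) :=
    Finset.monotone_filter_right Finset.univ fun k _ hk => hr.lt_of_lt_of_le hk hij
  have hup : Finset.univ.filter (fun k => P.lt j k) ⊆ Finset.univ.filter (fun k => P.lt i k) :=
    Finset.monotone_filter_right Finset.univ fun k _ hk => hr.lt_of_le_of_lt hij hk
  have cdown := Finset.card_le_card hdown
  have cup := Finset.card_le_card hup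
  have edown := Finset.eq_of_subset_of_card_le hdown (by omega)
  have eup := Finset.eq_of_subset_of_card_le hup (by omega)
  exact ⟨by simpa using Finset.ext_iff.1 edown k, by simpa using (Finset.ext_iff.1 eup k).symm⟩

/-- A representation can be made constant on the classes of elements of equal altitude; it is
then monotone in the altitude. -/
theorem exists_altitude_monotone (hr : IsIntervalRep P r) :
    ∃ q : Fin n → ℝ, (∀ i j, altitude P i ≤ altitude P j → q i ≤ q j) ∧ IsIntervalRep P q := by
  let s : Fin n → Fin n := fun i => Set.rangeSplitting (altitude P) ⟨altitude P i, i, rfl⟩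
  have hs : ∀ i, altitude P (s i) = altitude P i := fun i =>
    Set.apply_rangeSplitting (altitude P) ⟨altitude P i, i, rfl⟩
  have hs_eq : ∀ i j, altitude P i = altitude P j → s i = s j := fun i j h => by
    simp only [s, h]
  refine ⟨fun i => r (s i), fun i j h => ?_, fun i j => ?_⟩
  · rcases h.eq_or_lt with h | h
    · exact (congrArg r (hs_eq i j h)).le
    · by_contra! hlt
      have := hr.altitude_mono hlt.le
      rw [hs, hs] at this
      omega
  · rw [← (hr.lt_iff_lt_of_altitude_eq (hs i) j).2, ← (hr.lt_iff_lt_of_altitude_eq (hs j) (s i)).1]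
    exact hr (s i) (s j)

/-- A representation that is weakly increasing in the labels can be perturbed to a strictly
increasing one. -/
theorem exists_strictMono (hr : IsIntervalRep P r)
    (hmono : ∀ i j : Fin n, i.val < j.val → r i ≤ r j) :
    ∃ q : Fin n → ℝ, (∀ i j : Fin n, i.val < j.val → q i < q j) ∧ IsIntervalRep P q := by
  obtain ⟨e, he, hpos⟩ : ∃ e : ℝ, (∀ i j, P.lt i j → r i + 1 + 2 * e < r j) ∧ 0 < e := by
    have hev : ∀ᶠ e : ℝ in nhdsWithin 0 (Set.Ioi 0),
        ∀ i j, P.lt i j → r i + 1 + 2 * e < r j := by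
      refine Filter.eventually_all.2 fun i => Filter.eventually_all.2 fun j => ?_
      by_cases h : P.lt i j
      · have hlt := (hr i j).1 h
        filter_upwards [Ioo_mem_nhdsGT (show (0 : ℝ) < (r j - r i - 1) / 2 by linarith)] with e he _
        linarith [he.2]
      · exact Filter.Eventually.of_forall fun _ h' => absurd h' h
    exact (hev.and self_mem_nhdsWithin).exists
  have hfrac : ∀ i : Fin n, 0 ≤ (i : ℝ) / n ∧ (i : ℝ) / n < 1 := fun i => by
    have hi : (i : ℝ) < n := by exact_mod_cast i.isLt
    exact ⟨by positivity, (div_lt_one ((Nat.cast_nonneg _).trans_lt hi)).2 hi⟩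
  have hden : 0 < 1 + e := by linarith
  refine ⟨fun i => (r i + e * ((i : ℝ) / n)) / (1 + e), fun i j hij => ?_, fun i j => ?_⟩
  · have hn : (0 : ℝ) < n := by exact_mod_cast i.pos
    have hij' : (i : ℝ) < j := by exact_mod_cast hij
    have := hmono i j hij
    dsimp only
    gcongr ?_ / _
    exact add_lt_add_of_le_of_lt this (by gcongr)
  · have h1 : e * ((i : ℝ) / n) < e := mul_lt_of_lt_one_right hpos (hfrac i).2
    have h2 : e * ((j : ℝ) / n) < e := mul_lt_of_lt_one_right hpos (hfrac j).2
    have h3 : 0 ≤ e * ((i : ℝ) / n) := mul_nonneg hpos.le (hfrac i).1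
    have h4 : 0 ≤ e * ((j : ℝ) / n) := mul_nonneg hpos.le (hfrac j).1
    rw [div_add_one hden.ne', div_lt_div_iff_of_pos_right hden]
    refine ⟨fun h => ?_, fun h => ?_⟩
    · linarith [he i j h]
    · by_contra hn
      have := not_lt.1 (mt (hr i j).2 hn)
      linarith

end IsIntervalRep

/-- A unit interval order on `{1,…,n}` is canonically labeled iff it admits an interval
representation `q` with `q 1 < q 2 < ⋯ < q n` (in the order of the integers, not of `P`). -/
theorem isCanonicallyLabeled_iff_exists_strictMono_intervalRep
    {n : ℕ} (P : PartialOrder (Fin n)) (hP : IsUnitIntervalOrder P) :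
    IsCanonicallyLabeled P ↔
      ∃ q : Fin n → ℝ, (∀ i j : Fin n, i.val < j.val → q i < q j) ∧ IsIntervalRep P q := by
  constructor
  · intro hcan
    obtain ⟨r, hr⟩ := hP
    obtain ⟨q, hq, hrep⟩ := hr.exists_altitude_monotone
    exact hrep.exists_strictMono fun i j hij =>
      hq i j (not_lt.1 fun h => (hcan j i h).not_gt hij)
  · rintro ⟨q, hq, hrep⟩ i j halt
    by_contra! hji
    refine halt.not_ge (hrep.altitude_mono ?_)
    rcases hji.eq_or_lt with h | h
    · rw [Fin.ext h]
    · exact (hq j i h).le
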